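/- Let δ > 0, ε > 0 be real numbers and n a positive natural number. There is a constant K = K(δ, n, ε) with the following property. Let X be a geodesic metric space with δ-slim triangles and let h be an isometry of X whose stable translation length satisfies lim_{m→∞} d(y, h^m y)/m ≥ ε for every y ∈ X. If x and x' are two points of X with d(x, h·x) ≤ 2nδ and d(x', h·x') ≤ 2nδ, then the Hausdorff distance between the orbits {h^m·x : m ∈ ℤ} and {h^m·x' : m ∈ ℤ} is at most K. -/

import Mathlib

/-!
The orbit `m ↦ h ^ m x` is a quasi-geodesic whose constants depend only on `δ, ε, n`: neighbouring
orbit points are at distance at most `C = 2nδ`, and `ε * |i - j| ≤ dist (h ^ i x) (h ^ j x)`, because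
the stable translation length is a lower bound for `dist x (h ^ m x) / m`.

Half of the Morse lemma suffices. `infDist_orbit_log` bisects the orbit: a point of a geodesic
between the `i`-th and `j`-th orbit points is within `k * δ + C` of the orbit when `|i - j| ≤ 2 ^ k`.
`morse_bound` upgrades this to a uniform bound `R₀`: at the point of the geodesic farthest from the
orbit, at distance `R` say, the bisection estimate is applied to orbit points near the two points of
the geodesic `2R` away, which gives `R ≤ δ * log₂ R + const`; exponential growth then bounds `R`
(`exists_log_bound`).

Finally, for `N` large, the midpoint of a geodesic from `x` to `h ^ N x` is far from the geodesics
joining `x` to `x'` and `h ^ N x` to `h ^ N x'`, so by slimness of the quadrilateral it is `2δ`-close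
to a geodesic from `x'` to `h ^ N x'`. Both geodesics stay within `R₀` of the respective orbits,
so one point of the first orbit is uniformly close to one point of the second; translating by powers
of `h` gives the claim for all points.
-/

open Metric Filter

/-- `f` parametrizes a geodesic segment from `x` to `y` by arc length on `[0, dist x y]`. -/
def IsGeodesicSegment {X : Type*} [MetricSpace X] (f : ℝ → X) (x y : X) : Prop :=
  f 0 = x ∧ f (dist x y) = y ∧
    ∀ s ∈ Set.Icc (0 : ℝ) (dist x y), ∀ t ∈ Set.Icc (0 : ℝ) (dist x y),
      dist (f s) (f t) = |s - t|

/-- `σ` is (the image of) a geodesic segment joining `x` to `y`. -/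
def IsGeodesic {X : Type*} [MetricSpace X] (σ : Set X) (x y : X) : Prop :=
  ∃ f : ℝ → X, IsGeodesicSegment f x y ∧ σ = f '' Set.Icc 0 (dist x y)

/-- `X` is a geodesic metric space: any two points are joined by a geodesic segment. -/
def GeodesicSpace (X : Type*) [MetricSpace X] : Prop :=
  ∀ x y : X, ∃ σ : Set X, IsGeodesic σ x y

/-- Triangles in `X` are δ-slim: each side lies in the closed δ-neighborhood of the
union of the other two sides. -/
def SlimTriangles (X : Type*) [MetricSpace X] (δ : ℝ) : Prop :=
  ∀ x y z : X, ∀ s₁ s₂ s₃ : Set X,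
    IsGeodesic s₁ x y → IsGeodesic s₂ y z → IsGeodesic s₃ z x →
    ∀ p ∈ s₁, ∃ q ∈ s₂ ∪ s₃, dist p q ≤ δ

/-! ### Geodesics and slim quadrilaterals -/

section Geodesics

variable {X : Type*} [MetricSpace X]

lemma IsGeodesic.dist_left_le {σ : Set X} {x y p : X} (hσ : IsGeodesic σ x y) (hp : p ∈ σ) :
    dist x p ≤ dist x y := by
  obtain ⟨f, ⟨h0, -, hf⟩, rfl⟩ := hσ
  obtain ⟨t, ht, rfl⟩ := hp
  have := hf 0 ⟨le_rfl, dist_nonneg⟩ t ht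
  rw [h0] at this
  rw [this, zero_sub, abs_neg, abs_of_nonneg ht.1]
  exact ht.2

lemma IsGeodesic.symm {σ : Set X} {x y : X} (hσ : IsGeodesic σ x y) : IsGeodesic σ y x := by
  obtain ⟨f, ⟨h0, h1, hf⟩, rfl⟩ := hσ
  refine ⟨fun t => f (dist x y - t), ⟨?_, ?_, ?_⟩, ?_⟩
  · simpa using h1
  · simpa [dist_comm y x] using h0
  · intro s hs t ht
    rw [dist_comm y x] at hs ht
    rw [hf _ ⟨by linarith [hs.2], by linarith [hs.1]⟩ _ ⟨by linarith [ht.2], by linarith [ht.1]⟩,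
      abs_sub_comm s t]
    congr 1
    ring
  · rw [dist_comm y x]
    ext p
    constructor
    · rintro ⟨t, ht, rfl⟩
      exact ⟨dist x y - t, ⟨by linarith [ht.2], by linarith [ht.1]⟩, by simp⟩
    · rintro ⟨t, ht, rfl⟩
      exact ⟨dist x y - t, ⟨by linarith [ht.2], by linarith [ht.1]⟩, rfl⟩

/-- A subsegment of a geodesic segment is a geodesic. -/
lemma IsGeodesicSegment.sub {f : ℝ → X} {x y : X} (hf : IsGeodesicSegment f x y) {s t : ℝ}
    (hs : 0 ≤ s) (hst : s ≤ t) (ht : t ≤ dist x y) :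
    IsGeodesic (f '' Set.Icc s t) (f s) (f t) := by
  have hd : dist (f s) (f t) = t - s := by
    rw [hf.2.2 s ⟨hs, hst.trans ht⟩ t ⟨hs.trans hst, ht⟩, abs_sub_comm, abs_of_nonneg (by linarith)]
  refine ⟨fun r => f (s + r), ⟨by simp, by simp [hd], ?_⟩, ?_⟩
  · intro a ha b hb
    rw [hd] at ha hb
    rw [hf.2.2 _ ⟨by linarith [ha.1], by linarith [ha.2]⟩ _ ⟨by linarith [hb.1], by linarith [hb.2]⟩]
    congr 1
    ring
  · rw [hd]
    ext p
    constructor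
    · rintro ⟨r, hr, rfl⟩
      exact ⟨r - s, ⟨by linarith [hr.1], by linarith [hr.2]⟩, by simp⟩
    · rintro ⟨r, hr, rfl⟩
      exact ⟨s + r, ⟨by linarith [hr.1], by linarith [hr.2]⟩, rfl⟩

/-- Geodesic quadrilaterals are `2δ`-slim. -/
lemma SlimTriangles.quad {δ : ℝ} (hδ : 0 < δ) (hX : GeodesicSpace X) (hS : SlimTriangles X δ)
    {y z u v : X} {σ τ₁ τ₂ τ₃ : Set X} (hσ : IsGeodesic σ y z) (h₁ : IsGeodesic τ₁ y u)
    (h₂ : IsGeodesic τ₂ u v) (h₃ : IsGeodesic τ₃ z v) {p : X} (hp : p ∈ σ) :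
    ∃ q, dist p q ≤ 2 * δ ∧ (q ∈ τ₁ ∨ q ∈ τ₂ ∨ q ∈ τ₃) := by
  obtain ⟨ρ, hρ⟩ := hX z u
  obtain ⟨q, hq | hq, hpq⟩ := hS y z u σ ρ τ₁ hσ hρ h₁.symm p hp
  · obtain ⟨r, hr, hqr⟩ := hS z u v ρ τ₂ τ₃ hρ h₂ h₃.symm q hq
    refine ⟨r, by linarith [dist_triangle p q r], ?_⟩
    rcases hr with hr | hr
    · exact Or.inr (Or.inl hr)
    · exact Or.inr (Or.inr hr)
  · exact ⟨q, by linarith, Or.inl hq⟩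

end Geodesics

/-! ### Geodesics between points of a quasi-geodesic -/

section QuasiGeodesic

variable {X : Type*} [MetricSpace X]

/-- Bisection estimate: repeatedly splitting the index interval costs `δ` per halving. -/
lemma infDist_orbit_log {δ C : ℝ} (hX : GeodesicSpace X) (hS : SlimTriangles X δ) (o : ℤ → X)
    (hC : ∀ i j : ℤ, |i - j| ≤ 1 → dist (o i) (o j) ≤ C) (k : ℕ) :
    ∀ i j : ℤ, |i - j| ≤ 2 ^ k → ∀ σ, IsGeodesic σ (o i) (o j) → ∀ p ∈ σ,
      infDist p (Set.range o) ≤ k * δ + C := by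
  induction k with
  | zero =>
    intro i j hij σ hσ p hp
    have h1 := hσ.dist_left_le hp
    have h2 := hC i j (by simpa using hij)
    have h3 : infDist p (Set.range o) ≤ dist p (o i) := infDist_le_dist_of_mem ⟨i, rfl⟩
    rw [dist_comm] at h3
    simp only [Nat.cast_zero, zero_mul, zero_add]
    linarith
  | succ k ih =>
    intro i j hij σ hσ p hp
    obtain ⟨m, h1, h2⟩ : ∃ m : ℤ, |i - m| ≤ 2 ^ k ∧ |j - m| ≤ 2 ^ k := by
      refine ⟨(i + j) / 2, ?_, ?_⟩ <;>
      · rw [abs_le] at *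
        rw [pow_succ] at hij
        constructor <;> omega
    obtain ⟨τ₁, hτ₁⟩ := hX (o j) (o m)
    obtain ⟨τ₂, hτ₂⟩ := hX (o i) (o m)
    obtain ⟨q, hq, hpq⟩ := hS _ _ _ σ τ₁ τ₂ hσ hτ₁ hτ₂.symm p hp
    have hq' : infDist q (Set.range o) ≤ k * δ + C := by
      rcases hq with hq | hq
      · exact ih j m h2 _ hτ₁ q hq
      · exact ih i m h1 _ hτ₂ q hq
    have := infDist_le_infDist_add_dist (s := Set.range o) (x := p) (y := q)
    push_cast
    linarith

/-- A number bounded by a logarithm of itself is bounded: the condition on `R` is a discrete form of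
`R ≤ δ * log₂ ((6 * R + 2) / ε) + const`. -/
lemma exists_log_bound {δ ε C : ℝ} (hδ : 0 < δ) (hε : 0 < ε) :
    ∃ R₀ : ℝ, ∀ R : ℝ, (∀ k : ℕ, 6 * R + 2 ≤ ε * 2 ^ k → R ≤ (k + 2) * δ + C + 1) → R ≤ R₀ := by
  obtain ⟨k₀, hk₀⟩ : ∃ k₀ : ℕ, ∀ k ≥ k₀, 6 * ((k + 3) * δ + C + 1) + 2 ≤ ε * 2 ^ k := by
    have t1 := tendsto_pow_const_div_const_pow_of_one_lt 1 (one_lt_two : (1 : ℝ) < 2)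
    have t0 := tendsto_pow_const_div_const_pow_of_one_lt 0 (one_lt_two : (1 : ℝ) < 2)
    have t := (t1.const_mul (6 * δ)).add (t0.const_mul (6 * (3 * δ + C + 1) + 2))
    simp only [mul_zero, add_zero] at t
    obtain ⟨k₀, h⟩ := eventually_atTop.1 (t.eventually (gt_mem_nhds hε))
    refine ⟨k₀, fun k hk => ?_⟩
    have h2 : (0 : ℝ) < 2 ^ k := by positivity
    have := h k hk
    rw [← mul_div_assoc, ← mul_div_assoc, ← add_div, div_lt_iff₀ h2] at this
    simp only [pow_one, pow_zero] at this
    linarith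
  refine ⟨(k₀ + 3) * δ + C + 1, fun R H => ?_⟩
  by_contra! hR
  -- `k` is determined by `(k + 2) δ < R - C - 1 ≤ (k + 3) δ`
  have hex : ∃ k : ℕ, R ≤ (k + 3) * δ + C + 1 := by
    obtain ⟨k, hk⟩ := exists_nat_ge ((R - C - 1) / δ)
    rw [div_le_iff₀ hδ] at hk
    exact ⟨k, by nlinarith⟩
  classical
  have hk := Nat.find_spec hex
  have hmin := fun m => Nat.find_min hex (m := m)
  set k := Nat.find hex
  have hkk : k₀ < k := by
    by_contra! hle
    have : (k : ℝ) ≤ k₀ := by exact_mod_cast hle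
    nlinarith
  have h1 := H k (by linarith [hk₀ k hkk.le])
  obtain ⟨m, hm⟩ : ∃ m, k = m + 1 := ⟨k - 1, by omega⟩
  apply hmin m (by omega)
  rw [hm] at h1
  push_cast at h1
  linarith

/-- Half of the Morse lemma: geodesics with endpoints on the quasi-geodesic `o` stay within a
distance of `o` depending only on the constants. -/
lemma morse_bound {δ ε C : ℝ} (hδ : 0 < δ) (hε : 0 < ε) :
    ∃ R₀ : ℝ, ∀ (X : Type*) [MetricSpace X], GeodesicSpace X → SlimTriangles X δ →
      ∀ o : ℤ → X, (∀ i j : ℤ, |i - j| ≤ 1 → dist (o i) (o j) ≤ C) →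
        (∀ i j : ℤ, ε * |(i : ℝ) - j| ≤ dist (o i) (o j)) →
        ∀ i j : ℤ, ∀ σ, IsGeodesic σ (o i) (o j) → ∀ p ∈ σ, infDist p (Set.range o) ≤ R₀ := by
  obtain ⟨R₀, hR₀⟩ := exists_log_bound (C := C) hδ hε
  refine ⟨R₀, ?_⟩
  intro X _ hX hS o hC hlow a b σ hσ p hp
  have hC0 : 0 ≤ C := dist_nonneg.trans (hC 0 0 (by simp))
  obtain ⟨f, hf, rfl⟩ := hσ
  set O := Set.range o with hO
  set d := dist (o a) (o b) with hd
  have hd0 : 0 ≤ d := dist_nonneg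
  have hcont : ContinuousOn (fun t => infDist (f t) O) (Set.Icc 0 d) := by
    apply (continuous_infDist_pt O).comp_continuousOn
    apply LipschitzOnWith.continuousOn (K := 1)
    apply LipschitzOnWith.of_dist_le_mul
    intro s hs t ht
    rw [hf.2.2 s hs t ht, Real.dist_eq]
    simp
  obtain ⟨t, ht, hmax⟩ := isCompact_Icc.exists_isMaxOn ⟨0, le_rfl, hd0⟩ hcont
  have hmax' : ∀ s ∈ Set.Icc 0 d, infDist (f s) O ≤ infDist (f t) O := fun s hs => hmax hs
  obtain ⟨s, hs, rfl⟩ := hp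
  refine (hmax' s hs).trans (hR₀ _ ?_)
  set R := infDist (f t) O with hR
  have hR0 : 0 ≤ R := infDist_nonneg
  have hOne : O.Nonempty := ⟨o 0, 0, rfl⟩
  -- An orbit point near `f r` such that geodesics from `f r` to it stay away from `f t`;
  -- if `f r` is an endpoint of the geodesic, it is itself an orbit point.
  have key : ∀ r ∈ Set.Icc 0 d, (f r ∈ O ∨ |t - r| = 2 * R) →
      ∃ i : ℤ, dist (f r) (o i) ≤ R + 1 ∧
        ∀ τ, IsGeodesic τ (f r) (o i) → ∀ q ∈ τ, R - 1 ≤ dist (f t) q := by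
    rintro r hr (⟨i, hi⟩ | h2)
    · refine ⟨i, by rw [hi, dist_self]; linarith, fun τ hτ q hq => ?_⟩
      have h0 := hτ.dist_left_le hq
      rw [hi, dist_self] at h0
      have : f r = q := dist_le_zero.1 h0
      rw [← this, ← hi]
      have : R ≤ dist (f t) (o i) := infDist_le_dist_of_mem ⟨i, rfl⟩
      linarith
    · obtain ⟨_, ⟨i, rfl⟩, hi⟩ := (infDist_lt_iff hOne).1
        (lt_of_le_of_lt (hmax' r hr) (lt_add_one R))
      refine ⟨i, hi.le, fun τ hτ q hq => ?_⟩
      have h0 := hτ.dist_left_le hq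
      have h3 := hf.2.2 t ht r hr
      have h4 := dist_triangle (f t) q (f r)
      rw [dist_comm q] at h4
      linarith
  have hs1 : max 0 (t - 2 * R) ∈ Set.Icc 0 d :=
    ⟨le_max_left _ _, max_le hd0 (by linarith [ht.2])⟩
  have hs2 : min d (t + 2 * R) ∈ Set.Icc 0 d :=
    ⟨le_min hd0 (by linarith [ht.1]), min_le_left _ _⟩
  obtain ⟨i, hi, hi'⟩ := key _ hs1 (by
    rcases max_choice 0 (t - 2 * R) with h | h <;> rw [h]
    · exact Or.inl ⟨a, hf.1.symm⟩
    · right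
      rw [sub_sub_cancel, abs_of_nonneg (by linarith)])
  obtain ⟨j, hj, hj'⟩ := key _ hs2 (by
    rcases min_choice d (t + 2 * R) with h | h <;> rw [h]
    · exact Or.inl ⟨b, hf.2.1.symm⟩
    · right
      rw [sub_add_cancel_left, abs_neg, abs_of_nonneg (by linarith)])
  have hyz : dist (f (max 0 (t - 2 * R))) (f (min d (t + 2 * R))) ≤ 4 * R := by
    rw [hf.2.2 _ hs1 _ hs2, abs_le]
    have := le_max_right 0 (t - 2 * R)
    have := min_le_right d (t + 2 * R)
    have : max 0 (t - 2 * R) ≤ t := max_le ht.1 (by linarith)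
    have : t ≤ min d (t + 2 * R) := le_min ht.2 (by linarith)
    constructor <;> linarith
  have hsub := hf.sub hs1.1 (t := min d (t + 2 * R))
    ((max_le ht.1 (by linarith)).trans (le_min ht.2 (by linarith))) hs2.2
  have hpt : f t ∈ f '' Set.Icc (max 0 (t - 2 * R)) (min d (t + 2 * R)) :=
    ⟨t, ⟨max_le ht.1 (by linarith), le_min ht.2 (by linarith)⟩, rfl⟩
  intro k hk
  have hij : |i - j| ≤ 2 ^ k := by
    have h1 := hlow i j
    have h2 := dist_triangle4 (o i) (f (max 0 (t - 2 * R))) (f (min d (t + 2 * R))) (o j)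
    rw [dist_comm (o i) (f _)] at h2
    have h3 : ε * |(i : ℝ) - j| ≤ ε * 2 ^ k := by linarith
    have h4 := le_of_mul_le_mul_left h3 hε
    exact_mod_cast h4
  obtain ⟨τ₁, h₁⟩ := hX (f (max 0 (t - 2 * R))) (o i)
  obtain ⟨τ₂, h₂⟩ := hX (o i) (o j)
  obtain ⟨τ₃, h₃⟩ := hX (f (min d (t + 2 * R))) (o j)
  have hkδ : 0 ≤ k * δ := by positivity
  obtain ⟨q, hpq, hq | hq | hq⟩ := hS.quad hδ hX hsub h₁ h₂ h₃ hpt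
  · linarith [hi' _ h₁ q hq]
  · have h5 := infDist_orbit_log hX hS o hC k i j hij _ h₂ q hq
    have h6 := infDist_le_infDist_add_dist (s := O) (x := f t) (y := q)
    linarith
  · linarith [hj' _ h₃ q hq]

end QuasiGeodesic

/-! ### Orbits as quasi-geodesics -/

section Orbits

variable {X : Type*} [MetricSpace X]

lemma dist_zpow_zpow (h : X ≃ᵢ X) (x y : X) (k i j : ℤ) :
    dist ((h ^ (k + i)) x) ((h ^ (k + j)) y) = dist ((h ^ i) x) ((h ^ j) y) := by
  rw [zpow_add, zpow_add]
  exact (h ^ k).isometry.dist_eq _ _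

lemma dist_pow_mul_le (h : X ≃ᵢ X) (x : X) (m k : ℕ) :
    dist x ((h ^ (m * k)) x) ≤ k * dist x ((h ^ m) x) := by
  induction k with
  | zero => simp
  | succ k ih =>
    have h1 := dist_triangle x ((h ^ (m * k)) x) ((h ^ (m * (k + 1))) x)
    have h2 : dist ((h ^ (m * k)) x) ((h ^ (m * (k + 1))) x) = dist x ((h ^ m) x) := by
      rw [mul_add, mul_one, pow_add]
      exact (h ^ (m * k)).isometry.dist_eq _ _
    push_cast
    linarith

/-- By subadditivity the stable translation length bounds `dist x (h ^ m x) / m` from below. -/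
lemma mul_le_dist_pow {ε : ℝ} (h : X ≃ᵢ X) (x : X)
    (hL : ∃ L : ℝ, Tendsto (fun m : ℕ => dist x ((h ^ m) x) / m) atTop (nhds L) ∧ ε ≤ L) (m : ℕ) :
    ε * m ≤ dist x ((h ^ m) x) := by
  obtain ⟨L, hL, hε⟩ := hL
  rcases Nat.eq_zero_or_pos m with rfl | hm
  · simp
  have hm' : (0 : ℝ) < m := by exact_mod_cast hm
  rw [← le_div_iff₀ hm']
  refine hε.trans (le_of_tendsto (hL.comp (tendsto_id.const_mul_atTop' hm)) ?_)
  filter_upwards [eventually_gt_atTop 0] with k hk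
  have hk' : (0 : ℝ) < k := by exact_mod_cast hk
  simp only [Function.comp, id]
  rw [div_le_div_iff₀ (by push_cast; positivity) hm']
  push_cast
  nlinarith [dist_pow_mul_le h x m k]

lemma mul_le_dist_zpow {ε : ℝ} (h : X ≃ᵢ X) (x : X)
    (hL : ∃ L : ℝ, Tendsto (fun m : ℕ => dist x ((h ^ m) x) / m) atTop (nhds L) ∧ ε ≤ L)
    (i j : ℤ) : ε * |(i : ℝ) - j| ≤ dist ((h ^ i) x) ((h ^ j) x) := by
  wlog hij : i ≤ j generalizing i j
  · rw [abs_sub_comm, dist_comm]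
    exact this j i (by omega)
  obtain ⟨m, rfl⟩ := Int.le.dest hij
  have h1 := mul_le_dist_pow h x hL m
  have h2 := dist_zpow_zpow h x x i 0 m
  simp only [add_zero, zpow_zero, zpow_natCast] at h2
  rw [h2]
  simpa using h1

lemma dist_zpow_le {C : ℝ} (hC : 0 ≤ C) (h : X ≃ᵢ X) (x : X) (hx : dist x (h x) ≤ C)
    (i j : ℤ) (hij : |i - j| ≤ 1) : dist ((h ^ i) x) ((h ^ j) x) ≤ C := by
  wlog hle : i ≤ j generalizing i j
  · rw [dist_comm]
    exact this j i (by rwa [abs_sub_comm]) (by omega)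
  rw [abs_le] at hij
  obtain rfl | rfl : j = i ∨ j = i + 1 := by omega
  · simpa using hC
  · have h2 := dist_zpow_zpow h x x i 0 1
    simp only [add_zero, zpow_zero, zpow_one] at h2
    rw [h2]
    exact hx

end Orbits

/-! ### Comparing two orbits -/

/-- There is a constant `K = K(δ, n, ε)` such that for any isometry `h` of a geodesic
space with δ-slim triangles whose stable translation length is at least `ε`, any two
points moved at most `2nδ` by `h` have `h`-orbits at Hausdorff distance at most `K`. -/
theorem close_orbits.{u}
    (δ ε : ℝ) (hδ : 0 < δ) (hε : 0 < ε) (n : ℕ) (hn : 0 < n) :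
    ∃ K : ℝ, ∀ (X : Type u) [MetricSpace X],
      GeodesicSpace X → SlimTriangles X δ →
      ∀ h : X ≃ᵢ X,
        (∀ y : X, ∃ L : ℝ,
          Filter.Tendsto (fun m : ℕ => dist y ((h ^ m) y) / m) Filter.atTop (nhds L) ∧
            ε ≤ L) →
        ∀ x x' : X, dist x (h x) ≤ 2 * n * δ → dist x' (h x') ≤ 2 * n * δ →
          EMetric.hausdorffEdist
              (Set.range fun m : ℤ => (h ^ m) x)
              (Set.range fun m : ℤ => (h ^ m) x') ≤ ENNReal.ofReal K := by
  have hC0 : 0 ≤ 2 * n * δ := by positivity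
  obtain ⟨R₀, hR₀⟩ := morse_bound.{u} (C := 2 * n * δ) hδ hε
  refine ⟨2 * R₀ + 2 * δ + 2, ?_⟩
  intro X _ hX hS h hL x x' hx hx'
  obtain ⟨i, j, hij⟩ : ∃ i j : ℤ, dist ((h ^ i) x) ((h ^ j) x') ≤ 2 * R₀ + 2 * δ + 2 := by
    obtain ⟨N, hN⟩ := exists_nat_gt ((2 * (2 * δ + dist x x')) / ε)
    rw [div_lt_iff₀ hε] at hN
    have hlen := mul_le_dist_zpow h x (hL x) 0 N
    obtain ⟨σ, hσ⟩ := hX ((h ^ (0 : ℤ)) x) ((h ^ (N : ℤ)) x)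
    obtain ⟨τ₁, h₁⟩ := hX ((h ^ (0 : ℤ)) x) ((h ^ (0 : ℤ)) x')
    obtain ⟨τ₂, h₂⟩ := hX ((h ^ (0 : ℤ)) x') ((h ^ (N : ℤ)) x')
    obtain ⟨τ₃, h₃⟩ := hX ((h ^ (N : ℤ)) x) ((h ^ (N : ℤ)) x')
    obtain ⟨f, hf, hσf⟩ := id hσ
    set a := dist ((h ^ (0 : ℤ)) x) ((h ^ (N : ℤ)) x) with ha
    have ha' : 2 * (2 * δ + dist x x') < a := by
      refine hN.trans_le (le_trans (le_of_eq ?_) hlen)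
      simp [mul_comm]
    have ha0 : 0 ≤ a := dist_nonneg
    have hmid : a / 2 ∈ Set.Icc 0 a := ⟨by linarith, by linarith⟩
    have hp : f (a / 2) ∈ σ := hσf ▸ ⟨a / 2, hmid, rfl⟩
    have hd1 : dist (f (a / 2)) ((h ^ (0 : ℤ)) x) = a / 2 := by
      rw [← hf.1, hf.2.2 _ hmid _ ⟨le_rfl, ha0⟩, sub_zero, abs_of_nonneg hmid.1]
    have hd2 : dist (f (a / 2)) ((h ^ (N : ℤ)) x) = a / 2 := by
      conv_lhs => rw [← hf.2.1]
      rw [hf.2.2 _ hmid _ ⟨ha0, le_rfl⟩, abs_sub_comm, abs_of_nonneg (by linarith)]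
      ring
    have e1 : dist ((h ^ (0 : ℤ)) x) ((h ^ (0 : ℤ)) x') = dist x x' :=
      (h ^ (0 : ℤ)).isometry.dist_eq _ _
    have e3 : dist ((h ^ (N : ℤ)) x) ((h ^ (N : ℤ)) x') = dist x x' :=
      (h ^ (N : ℤ)).isometry.dist_eq _ _
    obtain ⟨q, hpq, hq | hq | hq⟩ := hS.quad hδ hX hσ h₁ h₂ h₃ hp
    · have t1 := h₁.dist_left_le hq
      have t2 := dist_triangle (f (a / 2)) q ((h ^ (0 : ℤ)) x)
      rw [dist_comm q] at t2
      linarith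
    · have b1 := hR₀ X hX hS (fun m : ℤ => (h ^ m) x) (dist_zpow_le hC0 h x hx)
        (mul_le_dist_zpow h x (hL x)) 0 N σ hσ _ hp
      have b2 := hR₀ X hX hS (fun m : ℤ => (h ^ m) x') (dist_zpow_le hC0 h x' hx')
        (mul_le_dist_zpow h x' (hL x')) 0 N τ₂ h₂ _ hq
      obtain ⟨_, ⟨i, rfl⟩, hi⟩ := (infDist_lt_iff (Set.range_nonempty _)).1
        (b1.trans_lt (lt_add_one R₀))
      obtain ⟨_, ⟨j, rfl⟩, hj⟩ := (infDist_lt_iff (Set.range_nonempty _)).1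
        (b2.trans_lt (lt_add_one R₀))
      refine ⟨i, j, ?_⟩
      have t := dist_triangle4 ((h ^ i) x) (f (a / 2)) q ((h ^ j) x')
      rw [dist_comm _ (f (a / 2))] at t
      linarith
    · have t1 := h₃.dist_left_le hq
      have t2 := dist_triangle (f (a / 2)) q ((h ^ (N : ℤ)) x)
      rw [dist_comm q] at t2
      linarith
  apply Metric.hausdorffEDist_le_of_mem_edist
  · rintro _ ⟨m, rfl⟩
    refine ⟨_, ⟨m - i + j, rfl⟩, ?_⟩
    rw [edist_dist]
    apply ENNReal.ofReal_le_ofReal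
    have := dist_zpow_zpow h x x' (m - i) i j
    rw [sub_add_cancel] at this
    exact this.trans_le hij
  · rintro _ ⟨m, rfl⟩
    refine ⟨_, ⟨m - j + i, rfl⟩, ?_⟩
    rw [edist_dist, dist_comm]
    apply ENNReal.ofReal_le_ofReal
    have := dist_zpow_zpow h x x' (m - j) i j
    rw [sub_add_cancel] at this
    exact this.trans_le hij
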